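/- Let F be the free group on a set of generators {E_x : x ∈ U} where U has at least two elements, and let s ∈ U be a distinguished element. Then the submonoid of F generated by the set {E_x : x ∈ U} ∪ {E_s⁻¹} ∪ {E_x·E_y⁻¹ : x, y ∈ U, x ≠ y} is a subgroup of F; in fact it is all of F. (This is the algebraic content of the insecurity of the simple protocol in which user x sends message M to y as E_y(M) and y replies with E_x(M): the monoid generated by the operators available to the adversary s, namely all encryptions E_x, the decryption D_s = E_s⁻¹, and the exchanged strings β_1(x,y) = E_x·E_y⁻¹, forms a subgroup of the Dolev–Yao group.) -/

import Mathlib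

/-!
An exchanged string `E_s * E_x⁻¹` in which the adversary `s` takes part, preceded by `D_s = E_s⁻¹`,
is the decryption `E_x⁻¹` of the other user. So the adversary's monoid contains every `E_x` together
with its inverse, and it is the subgroup that the encryptions generate. This works for any
family `E` in any group; in the free group the encryptions generate everything.
-/

section Group

variable {G ι : Type*} [Group G]

/-- The operators available to the adversary `s` of the simple protocol: all encryptions `E x`, the
decryption `(E s)⁻¹`, and the strings `E x * (E y)⁻¹` exchanged by distinct users. The encryptions
are an arbitrary family in a group; the Dolev–Yao group is the case `E = FreeGroup.of`. -/
def adversaryOperators (E : ι → G) (s : ι) : Set G :=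
  (Set.range E ∪ {(E s)⁻¹}) ∪ {g | ∃ x y, x ≠ y ∧ g = E x * (E y)⁻¹}

theorem adversaryOperators_subset_closure_range (E : ι → G) (s : ι) :
    adversaryOperators E s ⊆ Subgroup.closure (Set.range E) := by
  have encryption_mem (x : ι) : E x ∈ Subgroup.closure (Set.range E) :=
    Subgroup.subset_closure (Set.mem_range_self x)
  rintro _ ((⟨x, rfl⟩ | rfl) | ⟨x, y, -, rfl⟩)
  · exact encryption_mem x
  · exact inv_mem (encryption_mem s)
  · exact mul_mem (encryption_mem x) (inv_mem (encryption_mem y))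

theorem inv_mem_closure_adversaryOperators (E : ι → G) (s x : ι) :
    (E x)⁻¹ ∈ Submonoid.closure (adversaryOperators E s) := by
  have inv_adversary_mem : (E s)⁻¹ ∈ Submonoid.closure (adversaryOperators E s) :=
    Submonoid.subset_closure (.inl (.inr rfl))
  obtain rfl | hsx := eq_or_ne s x
  · exact inv_adversary_mem
  · have exchange_mem : E s * (E x)⁻¹ ∈ Submonoid.closure (adversaryOperators E s) :=
      Submonoid.subset_closure (.inr ⟨s, x, hsx, rfl⟩)
    simpa only [inv_mul_cancel_left] using mul_mem inv_adversary_mem exchange_mem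

theorem simple_protocol_adversary_monoid_is_subgroup_general (E : ι → G) (s : ι) :
    Submonoid.closure (adversaryOperators E s) =
      (Subgroup.closure (Set.range E)).toSubmonoid := by
  apply le_antisymm
  · exact Submonoid.closure_le.2 (adversaryOperators_subset_closure_range E s)
  · rw [Subgroup.closure_toSubmonoid, Submonoid.closure_le, Set.union_subset_iff,
      ← Set.image_inv_eq_inv, Set.image_subset_iff, Set.range_subset_iff, Set.range_subset_iff]
    exact ⟨fun x => Submonoid.subset_closure (.inl (.inl ⟨x, rfl⟩)),
      inv_mem_closure_adversaryOperators E s⟩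

end Group

/-- **(Insecurity of the simple echo protocol.)**  Let `F` be the free group on
generators `{E_x : x ∈ U}` with `U` having at least two elements, and let `s ∈ U` be
the adversary.  The submonoid of `F` generated by all encryptions `E_x`, the
decryption `D_s = E_s⁻¹`, and the exchanged strings `E_x · E_y⁻¹` (`x ≠ y`) is a
subgroup of `F` (closed under inverses); in fact it is all of `F`. -/
theorem simple_protocol_adversary_monoid_is_subgroup
    (U : Type) [Nontrivial U] (s : U) :
    (∀ g ∈ Submonoid.closure
        ((Set.range (FreeGroup.of : U → FreeGroup U) ∪ {(FreeGroup.of s)⁻¹}) ∪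
          {g : FreeGroup U | ∃ x y : U, x ≠ y ∧ g = FreeGroup.of x * (FreeGroup.of y)⁻¹}),
      g⁻¹ ∈ Submonoid.closure
        ((Set.range (FreeGroup.of : U → FreeGroup U) ∪ {(FreeGroup.of s)⁻¹}) ∪
          {g : FreeGroup U | ∃ x y : U, x ≠ y ∧ g = FreeGroup.of x * (FreeGroup.of y)⁻¹})) ∧
    Submonoid.closure
        ((Set.range (FreeGroup.of : U → FreeGroup U) ∪ {(FreeGroup.of s)⁻¹}) ∪
          {g : FreeGroup U | ∃ x y : U, x ≠ y ∧ g = FreeGroup.of x * (FreeGroup.of y)⁻¹}) = ⊤ := by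
  have closure_eq_top : Submonoid.closure (adversaryOperators FreeGroup.of s) = ⊤ := by
    rw [simple_protocol_adversary_monoid_is_subgroup_general, FreeGroup.closure_range_of,
      Subgroup.top_toSubmonoid]
  exact ⟨fun g _ => closure_eq_top ▸ Submonoid.mem_top g⁻¹, closure_eq_top⟩
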